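/- Great circles in a common left Hopf bundle are Clifford-parallel, and the Hopf map halves distances: let p, q, r be pure unit quaternions. Then for every x ∈ K_p^q, the geodesic distance d(x, K_r^q) = inf_{y ∈ K_r^q} arccos ⟪x, y⟫ equals (arccos ⟪p, r⟫)/2; in particular this distance does not depend on the choice of x ∈ K_p^q, and d(K_p^q, K_r^q) = d(p, r)/2. -/

import Mathlib

open Quaternion RealInnerProductSpace

/-- The great circle `K_p^q`: the set of unit quaternions `x` with
`(conj x) * p * x = q`. -/
def K (p q : Quaternion ℝ) : Set (Quaternion ℝ) :=
  {x : Quaternion ℝ | ‖x‖ = 1 ∧ star x * p * x = q}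

/-- The geodesic (angular) distance from a point `x` of `S³` to a subset `A` of `S³`:
`d(x, A) = inf_{y ∈ A} arccos ⟪x, y⟫`. -/
noncomputable def sdist (x : Quaternion ℝ) (A : Set (Quaternion ℝ)) : ℝ :=
  sInf ((fun y => Real.arccos ⟪x, y⟫) '' A)


theorem aux_normsq (x : Quaternion ℝ) (h : ‖x‖ = 1) :
    x.re ^ 2 + x.imI ^ 2 + x.imJ ^ 2 + x.imK ^ 2 = 1 := by
  rw [← Quaternion.normSq_def', Quaternion.normSq_eq_norm_mul_self, h, mul_one]

theorem aux_norm (x : Quaternion ℝ)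
    (h : x.re ^ 2 + x.imI ^ 2 + x.imJ ^ 2 + x.imK ^ 2 = 1) : ‖x‖ = 1 := by
  rw [← Quaternion.normSq_def', Quaternion.normSq_eq_norm_mul_self] at h
  nlinarith [norm_nonneg x]

theorem aux_inner (x y : Quaternion ℝ) :
    ⟪x, y⟫ = x.re * y.re + x.imI * y.imI + x.imJ * y.imJ + x.imK * y.imK := by
  rw [Quaternion.inner_def]
  simp

theorem aux_star_mul (x : Quaternion ℝ) (h : ‖x‖ = 1) : star x * x = 1 := by
  rw [Quaternion.star_mul_self, Quaternion.normSq_eq_norm_mul_self, h]; simp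

theorem aux_mul_star (x : Quaternion ℝ) (h : ‖x‖ = 1) : x * star x = 1 := by
  rw [Quaternion.self_mul_star, Quaternion.normSq_eq_norm_mul_self, h]; simp

theorem aux_bd (x y : Quaternion ℝ) (hx : ‖x‖ = 1) (hy : ‖y‖ = 1) :
    -1 ≤ ⟪x, y⟫ ∧ ⟪x, y⟫ ≤ 1 := by
  have h := abs_real_inner_le_norm x y
  rw [hx, hy, mul_one] at h
  exact abs_le.mp h

theorem aux_cos (p r : Quaternion ℝ) (hp : ‖p‖ = 1) (hr : ‖r‖ = 1) :
    Real.cos (Real.arccos ⟪p, r⟫ / 2) = Real.sqrt ((1 + ⟪p, r⟫) / 2) := by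
  rw [Real.cos_half (by linarith [Real.arccos_nonneg ⟪p, r⟫, Real.pi_pos])
    (Real.arccos_le_pi _), Real.cos_arccos (aux_bd p r hp hr).1 (aux_bd p r hp hr).2]

theorem aux_arccos (p r : Quaternion ℝ) (hp : ‖p‖ = 1) (hr : ‖r‖ = 1) :
    Real.arccos (Real.sqrt ((1 + ⟪p, r⟫) / 2)) = Real.arccos ⟪p, r⟫ / 2 := by
  rw [← aux_cos p r hp hr, Real.arccos_cos]
  · linarith [Real.arccos_nonneg ⟪p, r⟫]
  · linarith [Real.arccos_nonneg ⟪p, r⟫, Real.arccos_le_pi ⟪p, r⟫]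

theorem aux_lower_u (p u : Quaternion ℝ) (hp : p.re = 0) (hpn : ‖p‖ = 1) (hu : ‖u‖ = 1) :
    2 * u.re ^ 2 ≤ 1 + ⟪p, u * p * star u⟫ := by
  have h1 := aux_normsq p hpn
  have h2 := aux_normsq u hu
  have key : 1 + ⟪p, u * p * star u⟫ - 2 * u.re ^ 2
      = 2 * (u.imI * p.imI + u.imJ * p.imJ + u.imK * p.imK) ^ 2 := by
    rw [aux_inner]
    simp only [Quaternion.re_mul, Quaternion.imI_mul, Quaternion.imJ_mul, Quaternion.imK_mul,
      Quaternion.re_star, Quaternion.imI_star, Quaternion.imJ_star, Quaternion.imK_star, hp]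
    rw [hp] at h1
    linear_combination (u.re ^ 2 - u.imI ^ 2 - u.imJ ^ 2 - u.imK ^ 2) * h1 - h2
  nlinarith [sq_nonneg (u.imI * p.imI + u.imJ * p.imJ + u.imK * p.imK)]

theorem aux_lower (p q r x y : Quaternion ℝ) (hp : p.re = 0) (hpn : ‖p‖ = 1)
    (hrn : ‖r‖ = 1) (hx : x ∈ K p q) (hy : y ∈ K r q) :
    Real.arccos ⟪p, r⟫ / 2 ≤ Real.arccos ⟪x, y⟫ := by
  obtain ⟨hxn, hx⟩ := hx
  obtain ⟨hyn, hy⟩ := hy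
  have hu : ‖y * star x‖ = 1 := by rw [norm_mul, norm_star, hxn, hyn, mul_one]
  have hr' : (y * star x) * p * star (y * star x) = r := by
    calc (y * star x) * p * star (y * star x) = y * (star x * p * x) * star y := by
          simp [mul_assoc]
      _ = (y * star y) * r * (y * star y) := by rw [hx, ← hy]; simp only [mul_assoc]
      _ = r := by rw [aux_mul_star y hyn]; simp
  have h := aux_lower_u p _ hp hpn hu
  rw [hr'] at h
  have hre : ⟪x, y⟫ = (y * star x).re := by
    rw [real_inner_comm, Quaternion.inner_def]
  rw [← aux_arccos p r hpn hrn, hre]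
  apply Real.arccos_le_arccos
  apply Real.le_sqrt_of_sq_le
  linarith

theorem aux_anti (u p : Quaternion ℝ) (hu : u.re = 0) (hp : p.re = 0)
    (h : u.imI * p.imI + u.imJ * p.imJ + u.imK * p.imK = 0) : u * p = -p * u := by
  apply Quaternion.ext <;>
  simp only [Quaternion.re_mul, Quaternion.imI_mul, Quaternion.imJ_mul, Quaternion.imK_mul,
    Quaternion.re_neg, Quaternion.imI_neg, Quaternion.imJ_neg, Quaternion.imK_neg, hp, hu]
  · linear_combination -2 * h
  all_goals ring

theorem aux_exists (p r : Quaternion ℝ) (hp : p.re = 0) (hpn : ‖p‖ = 1)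
    (hr : r.re = 0) (hrn : ‖r‖ = 1) :
    ∃ u : Quaternion ℝ, ‖u‖ = 1 ∧ u * p = r * u ∧ u.re = Real.sqrt ((1 + ⟪p, r⟫) / 2) := by
  have h1 := aux_normsq p hpn
  have h2 := aux_normsq r hrn
  have hpp : p * p = -1 := by
    have := aux_star_mul p hpn
    rw [Quaternion.star_eq_neg.mpr hp] at this
    rw [← this]; simp
  have hrr : r * r = -1 := by
    have := aux_star_mul r hrn
    rw [Quaternion.star_eq_neg.mpr hr] at this
    rw [← this]; simp
  rcases (aux_bd p r hpn hrn).1.eq_or_lt with h | h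
  · have hrp : r = -p := by
      have : ‖p + r‖ ^ 2 = 0 := by
        rw [norm_add_sq_real, hpn, hrn, ← h]; norm_num
      have := norm_eq_zero.mp (pow_eq_zero_iff (two_ne_zero) |>.mp this)
      exact (neg_eq_of_add_eq_zero_right this).symm
    rw [← h, hrp]
    rw [hp] at h1
    by_cases h0 : p.imI ^ 2 + p.imJ ^ 2 = 0
    · have hi : p.imI = 0 := by nlinarith [sq_nonneg p.imI, sq_nonneg p.imJ]
      have hj : p.imJ = 0 := by nlinarith [sq_nonneg p.imI, sq_nonneg p.imJ]
      refine ⟨⟨0, 1, 0, 0⟩, aux_norm _ (by norm_num), ?_, by simp⟩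
      exact aux_anti _ _ rfl hp (by simp [hi])
    · have hs : 0 < p.imI ^ 2 + p.imJ ^ 2 := by positivity
      obtain ⟨s, hs'⟩ : ∃ s : ℝ, s ^ 2 * (p.imI ^ 2 + p.imJ ^ 2) = 1 :=
        ⟨(Real.sqrt (p.imI ^ 2 + p.imJ ^ 2))⁻¹, by
          rw [inv_pow, Real.sq_sqrt hs.le, inv_mul_cancel₀ hs.ne']⟩
      refine ⟨⟨0, -(s * p.imJ), s * p.imI, 0⟩, aux_norm _ ?_, ?_, by simp⟩
      · simp only []
        linear_combination hs'
      · exact aux_anti _ _ rfl hp (by simp only []; ring)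
  · set c := ⟪p, r⟫ with hc
    have hpos : 0 < 2 + 2 * c := by linarith
    set s := Real.sqrt (2 + 2 * c) with hsdef
    have hs2 : s ^ 2 = 2 + 2 * c := Real.sq_sqrt hpos.le
    have hs0 : 0 < s := Real.sqrt_pos.mpr hpos
    have hre : (1 - r * p).re = 1 + c := by
      rw [hc, aux_inner]
      simp [hp, hr]; ring
    have hnorm : ‖1 - r * p‖ = s := by
      have e : r * (1 - r * p) = r + p := by
        rw [mul_sub, ← mul_assoc, hrr]; simp
      have e2 : ‖1 - r * p‖ = ‖r + p‖ := by rw [← e, norm_mul, hrn, one_mul]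
      have e3 : ‖r + p‖ ^ 2 = 2 + 2 * c := by
        rw [norm_add_sq_real, hpn, hrn, real_inner_comm]; rw [← hc]; ring
      rw [e2, hsdef, ← e3, Real.sqrt_sq (norm_nonneg _)]
    refine ⟨s⁻¹ • (1 - r * p), ?_, ?_, ?_⟩
    · rw [norm_smul, hnorm, Real.norm_of_nonneg (by positivity), inv_mul_cancel₀ hs0.ne']
    · rw [smul_mul_assoc, mul_smul_comm, sub_mul, mul_sub, mul_assoc r p p, ← mul_assoc r r p,
        hpp, hrr]
      congr 1
      simp [add_comm]
    · rw [Quaternion.re_smul, hre]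
      symm
      rw [Real.sqrt_eq_iff_mul_self_eq (by linarith) (by
        have : 0 < 1 + c := by linarith
        simp only [smul_eq_mul]; positivity)]
      simp only [smul_eq_mul]
      field_simp
      rw [hs2]; ring

theorem aux_attain (p q r x : Quaternion ℝ) (hp : p.re = 0) (hpn : ‖p‖ = 1)
    (hr : r.re = 0) (hrn : ‖r‖ = 1) (hx : x ∈ K p q) :
    ∃ y ∈ K r q, Real.arccos ⟪x, y⟫ = Real.arccos ⟪p, r⟫ / 2 := by
  obtain ⟨hxn, hx⟩ := hx
  obtain ⟨u, hu, hur, hure⟩ := aux_exists p r hp hpn hr hrn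
  refine ⟨u * x, ⟨by rw [norm_mul, hu, hxn, mul_one], ?_⟩, ?_⟩
  · calc star (u * x) * r * (u * x) = star x * (star u * (r * u)) * x := by
          simp [mul_assoc]
      _ = star x * p * x := by
          rw [← hur, ← mul_assoc (star u), aux_star_mul u hu, one_mul]
      _ = q := hx
  · rw [real_inner_comm, Quaternion.inner_def, mul_assoc, aux_mul_star x hxn, mul_one, hure,
      aux_arccos p r hpn hrn]

theorem statement12 (p q r : Quaternion ℝ)
    (hp : p.re = 0) (hpn : ‖p‖ = 1) (hq : q.re = 0) (hqn : ‖q‖ = 1)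
    (hr : r.re = 0) (hrn : ‖r‖ = 1) :
    (∀ x ∈ K p q, sdist x (K r q) = Real.arccos ⟪p, r⟫ / 2) ∧
    sInf ((fun z : Quaternion ℝ × Quaternion ℝ => Real.arccos ⟪z.1, z.2⟫) ''
        (K p q ×ˢ K r q)) = Real.arccos ⟪p, r⟫ / 2 := by
  constructor
  · intro x hx
    obtain ⟨y, hy, hxy⟩ := aux_attain p q r x hp hpn hr hrn hx
    apply IsLeast.csInf_eq
    refine ⟨⟨y, hy, hxy⟩, ?_⟩
    rintro _ ⟨z, hz, rfl⟩
    exact aux_lower p q r x z hp hpn hrn hx hz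
  · obtain ⟨u, hu, hur, -⟩ := aux_exists p q hp hpn hq hqn
    have hx : star u ∈ K p q := by
      refine ⟨by rw [norm_star, hu], ?_⟩
      rw [star_star, hur, mul_assoc, aux_mul_star u hu, mul_one]
    obtain ⟨y, hy, hxy⟩ := aux_attain p q r _ hp hpn hr hrn hx
    apply IsLeast.csInf_eq
    refine ⟨⟨(star u, y), ⟨hx, hy⟩, hxy⟩, ?_⟩
    rintro _ ⟨⟨x, z⟩, ⟨hx, hz⟩, rfl⟩
    exact aux_lower p q r x z hp hpn hrn hx hz
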